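/- Let d ≥ 1 and let K : 𝕋^d → ℝ^d be a measurable kernel satisfying either (i) K is bounded, or (ii) K(−x) = −K(x) for all x, K(0) = 0, and sup_x |x|·|K(x)| < ∞, where |x| denotes the distance from x to 0 in 𝕋^d. For k ∈ ℤ^d ∖ {0} and a probability measure μ on 𝕋^d define Φ_k(μ) := ∬_{𝕋^d × 𝕋^d} (k·K(x−y)) e_k(x) dμ(x) dμ(y) in case (i), and Φ_k(μ) := (1/2) ∬_{𝕋^d × 𝕋^d} (k·K(x−y)) (e_k(x) − e_k(y)) dμ(x) dμ(y) in case (ii). Then for every α > d/2 + 2 there exists a constant C > 0, depending only on α, d, and ‖K‖_{L^∞} in case (i), respectively sup_x |x||K(x)| in case (ii), such that for every integer N ≥ 2, every probability measure ρ̄ on 𝕋^d, and every probability measure ρ_N on (𝕋^d)^N with H(ρ_N | ρ̄^{⊗N}) < ∞: ∫_{(𝕋^d)^N} Σ_{k ∈ ℤ^d ∖ {0}} ⟨k⟩^{−2α} | Φ_k(μ_N) − Φ_k(ρ̄) |² dρ_N ≤ (C/N) ( H(ρ_N | ρ̄^{⊗N}) + 1 ), where μ_N = (1/N) Σ_{i=1}^N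 δ_{x_i} is the empirical measure of (x_1,…,x_N). -/

import Mathlib

open MeasureTheory Classical

/-- The `d`-dimensional torus `𝕋^d = (ℝ/2πℤ)^d`. -/
abbrev Torus (d : ℕ) := Fin d → AddCircle (2 * Real.pi)

/-- The Fourier character `e_k(x) = exp(√−1 k·x)` on the torus, for `k ∈ ℤ^d`. -/
noncomputable def ek (d : ℕ) (k : Fin d → ℤ) (x : Torus d) : ℂ :=
  ∏ j, fourier (k j) (x j)

/-- The relative entropy `H(μ|ν) := ∫ (dμ/dν) log(dμ/dν) dν` if `μ ≪ ν` (and the integrand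
is integrable; otherwise `+∞`), with values in the extended reals. -/
noncomputable def relEntropy {E : Type*} [MeasurableSpace E] (μ ν : Measure E) : EReal :=
  if μ ≪ ν ∧ Integrable
      (fun x => (μ.rnDeriv ν x).toReal * Real.log (μ.rnDeriv ν x).toReal) ν
  then ((∫ x, (μ.rnDeriv ν x).toReal * Real.log (μ.rnDeriv ν x).toReal ∂ν : ℝ) : EReal)
  else ⊤

/-- The empirical measure `μ_N = N⁻¹ ∑_{i=1}^N δ_{x_i}` of a configuration
`x ∈ (𝕋^d)^N`. -/
noncomputable def empiricalMeasure (d N : ℕ) (x : Fin N → Torus d) : Measure (Torus d) :=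
  (N : ENNReal)⁻¹ • ∑ i, Measure.dirac (x i)

/-- Case (i) pairing: `Φ_k(μ) = ∬ (k·K(x−y)) e_k(x) dμ(x) dμ(y)`. -/
noncomputable def pairK₁ (d : ℕ) (K : Torus d → EuclideanSpace ℝ (Fin d))
    (k : Fin d → ℤ) (μ : Measure (Torus d)) : ℂ :=
  ∫ x, ∫ y, ((∑ j, (k j : ℝ) * K (x - y) j : ℝ) : ℂ) * ek d k x ∂μ ∂μ

/-- Case (ii) (symmetrized) pairing:
`Φ_k(μ) = (1/2) ∬ (k·K(x−y)) (e_k(x) − e_k(y)) dμ(x) dμ(y)`. -/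
noncomputable def pairK₂ (d : ℕ) (K : Torus d → EuclideanSpace ℝ (Fin d))
    (k : Fin d → ℤ) (μ : Measure (Torus d)) : ℂ :=
  (2 : ℂ)⁻¹ *
    ∫ x, ∫ y, ((∑ j, (k j : ℝ) * K (x - y) j : ℝ) : ℂ) * (ek d k x - ek d k y) ∂μ ∂μ


lemma bdd_integrable {Y : Type*} [MeasurableSpace Y] {μ : Measure Y} [IsFiniteMeasure μ]
    {f : Y → ℝ} (hf : Measurable f) {M : ℝ} (hM : ∀ x, |f x| ≤ M) : Integrable f μ :=
  Integrable.of_bound hf.aestronglyMeasurable M (Filter.Eventually.of_forall hM)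

lemma integral_cons {X : Type*} [MeasurableSpace X] (ρ : Measure X) [IsProbabilityMeasure ρ]
    (n : ℕ) (F : (Fin (n+1) → X) → ℝ) (hF : Measurable F) {M : ℝ} (hM : ∀ x, |F x| ≤ M) :
    ∫ x, F x ∂(Measure.pi fun _ : Fin (n+1) => ρ) =
      ∫ y, (∫ a, F (Fin.cons a y) ∂ρ) ∂(Measure.pi fun _ : Fin n => ρ) := by
  have h := (measurePreserving_piFinSuccAbove (fun _ : Fin (n+1) => ρ) 0).symm
  rw [← h.integral_comp' (g := F), integral_prod_symm]
  · simp [MeasurableEquiv.piFinSuccAbove, Fin.insertNthEquiv]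
  · apply bdd_integrable (hF.comp (MeasurableEquiv.measurable _)) (fun _ => hM _)

lemma measurable_cons {X : Type*} [MeasurableSpace X] (n : ℕ) :
    Measurable (fun p : X × (Fin n → X) => (Fin.cons p.1 p.2 : Fin (n+1) → X)) := by
  have := (MeasurableEquiv.piFinSuccAbove (fun _ : Fin (n+1) => X) 0).symm.measurable
  simpa [MeasurableEquiv.piFinSuccAbove, Fin.insertNthEquiv] using this

lemma bdd_integral {Y : Type*} [MeasurableSpace Y] {μ : Measure Y} [IsProbabilityMeasure μ]
    {f : Y → ℝ} {M : ℝ} (hM : ∀ x, |f x| ≤ M) : |∫ x, f x ∂μ| ≤ M := by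
  have := norm_integral_le_of_norm_le_const (μ := μ) (f := f) (C := M) (Filter.Eventually.of_forall hM)
  simpa using this

lemma mcd {X : Type*} [MeasurableSpace X] (ρ : Measure X) [IsProbabilityMeasure ρ] (c : ℝ)
    (hc : 0 ≤ c) (n : ℕ) : ∀ (f : (Fin n → X) → ℝ), Measurable f → ∀ M : ℝ, (∀ x, |f x| ≤ M) →
    (∀ x i a, |f (Function.update x i a) - f x| ≤ c) → ∀ t : ℝ,
    ∫ x, Real.exp (t * (f x - ∫ y, f y ∂(Measure.pi fun _ => ρ))) ∂(Measure.pi fun _ => ρ)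
      ≤ Real.exp (n * c ^ 2 * t ^ 2 / 2) := by
  induction n with
  | zero =>
    intro f hf M hM hd t
    have : ∀ x, f x = ∫ y, f y ∂(Measure.pi fun _ : Fin 0 => ρ) := by
      intro x
      have : ∀ y, f y = f x := fun y => by congr 1; exact Subsingleton.elim _ _
      simp [this]
    have h0 : ∀ x, f x - ∫ y, f y ∂(Measure.pi fun _ : Fin 0 => ρ) = 0 := fun x => sub_eq_zero.2 (this x)
    simp_rw [h0]
    simp
  | succ n ih =>
    intro f hf M hM hd t
    set g : (Fin n → X) → ℝ := fun y => ∫ a, f (Fin.cons a y) ∂ρ with hg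
    have hfc : Measurable (fun p : X × (Fin n → X) => f (Fin.cons p.1 p.2)) :=
      hf.comp (measurable_cons n)
    have hfy : ∀ y, Measurable (fun a : X => f (Fin.cons a y)) := fun y =>
      hfc.comp (measurable_id.prodMk measurable_const)
    have hgm : Measurable g := by
      have : StronglyMeasurable (fun p : (Fin n → X) × X => f (Fin.cons p.2 p.1)) :=
        (hfc.comp measurable_swap).stronglyMeasurable
      exact (this.integral_prod_right (ν := ρ)).measurable
    have hgM : ∀ y, |g y| ≤ M := fun y => bdd_integral (fun _ => hM _)
    have hgd : ∀ y i b, |g (Function.update y i b) - g y| ≤ c := by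
      intro y i b
      rw [hg, ← integral_sub (bdd_integrable (hfy _) (fun _ => hM _)) (bdd_integrable (hfy _) (fun _ => hM _))]
      apply bdd_integral
      intro a
      rw [Fin.cons_update]
      exact hd _ _ _
    set m := ∫ y, f y ∂(Measure.pi fun _ => ρ) with hm
    have hmg : m = ∫ y, g y ∂(Measure.pi fun _ => ρ) := integral_cons ρ n f hf hM
    have hmM : |m| ≤ M := bdd_integral hM
    have hexpb : ∀ (u v : ℝ), |u| ≤ M → |v| ≤ M → |Real.exp (t * (u - v))| ≤ Real.exp (|t| * (2 * M)) := by
      intro u v hu hv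
      rw [abs_of_pos (Real.exp_pos _), Real.exp_le_exp]
      calc t * (u - v) ≤ |t * (u - v)| := le_abs_self _
        _ = |t| * |u - v| := abs_mul _ _
        _ ≤ _ := by
          gcongr
          have := abs_sub u v
          linarith
    rw [integral_cons ρ n _ (by fun_prop) (M := Real.exp (|t| * (2 * M)))
      (fun x => hexpb _ _ (hM x) hmM)]
    have key : ∀ y, ∫ a, Real.exp (t * (f (Fin.cons a y) - m)) ∂ρ ≤
        Real.exp (t * (g y - m)) * Real.exp (c ^ 2 * t ^ 2 / 2) := by
      intro y
      have : ∀ a, Real.exp (t * (f (Fin.cons a y) - m)) =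
          Real.exp (t * (g y - m)) * Real.exp (t * (f (Fin.cons a y) - g y)) := by
        intro a; rw [← Real.exp_add]; congr 1; ring
      simp_rw [this]
      rw [integral_const_mul]
      gcongr
      have : Nonempty X := ρ.nonempty_of_neZero
      obtain ⟨a0⟩ := this
      have h1 := ProbabilityTheory.hasSubgaussianMGF_of_mem_Icc (μ := ρ) (X := fun a => f (Fin.cons a y))
        (a := f (Fin.cons a0 y) - c) (b := f (Fin.cons a0 y) + c) (hfy y).aemeasurable
        (Filter.Eventually.of_forall fun a => by
          have := hd (Fin.cons a0 y) 0 a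
          rw [Fin.update_cons_zero] at this
          have := abs_le.1 this
          constructor <;> linarith)
      have h2 := h1.mgf_le t
      unfold ProbabilityTheory.mgf at h2
      refine h2.trans (le_of_eq ?_)
      congr 1
      push_cast
      have : f (Fin.cons a0 y) + c - (f (Fin.cons a0 y) - c) = 2 * c := by ring
      rw [this, Real.norm_of_nonneg (by positivity)]
      ring
    have hmeas : Measurable (fun p : X × (Fin n → X) => Real.exp (t * (f (Fin.cons p.1 p.2) - m))) :=
      Real.measurable_exp.comp ((hfc.sub_const m).const_mul t)
    calc _ ≤ ∫ y, Real.exp (t * (g y - m)) * Real.exp (c ^ 2 * t ^ 2 / 2) ∂(Measure.pi fun _ => ρ) := by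
          apply integral_mono _ _ key
          · apply bdd_integrable (M := Real.exp (|t| * (2 * M)))
            · have : StronglyMeasurable (fun p : (Fin n → X) × X => Real.exp (t * (f (Fin.cons p.2 p.1) - m))) :=
                (hmeas.comp measurable_swap).stronglyMeasurable
              exact (this.integral_prod_right (ν := ρ)).measurable
            · intro y
              exact bdd_integral (fun a => hexpb _ _ (hM _) hmM)
          · apply Integrable.mul_const
            exact bdd_integrable (by fun_prop) (fun y => hexpb _ _ (hgM y) hmM)
      _ ≤ Real.exp (n * c ^ 2 * t ^ 2 / 2) * Real.exp (c ^ 2 * t ^ 2 / 2) := by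
          rw [integral_mul_const]
          gcongr
          rw [hmg]
          exact ih g hgm M hgM hgd t
      _ = _ := by rw [← Real.exp_add]; congr 1; push_cast; ring

/-- Gaussian linearization. -/
lemma expSq {Y : Type*} [MeasurableSpace Y] (μ : Measure Y) [IsProbabilityMeasure μ] (f : Y → ℝ)
    (hf : Measurable f) (M : ℝ) (hM : ∀ x, |f x| ≤ M) (s : ℝ) (hs : 0 < s)
    (h : ∀ t, ∫ x, Real.exp (t * f x) ∂μ ≤ Real.exp (s * t ^ 2 / 2)) :
    ∫ x, Real.exp (f x ^ 2 / (4 * s)) ∂μ ≤ 2 := by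
  set γ := ProbabilityTheory.gaussianReal 0 1
  set r := √(1 / (2 * s)) with hr
  have hr2 : r ^ 2 = 1 / (2 * s) := Real.sq_sqrt (by positivity)
  have hint : ∀ u : ℝ, Integrable (fun z => Real.exp (u * z)) γ := fun u =>
    ProbabilityTheory.integrable_exp_mul_gaussianReal u
  have h1 : ∀ u : ℝ, ∫⁻ z, ENNReal.ofReal (Real.exp (u * z)) ∂γ = ENNReal.ofReal (Real.exp (u ^ 2 / 2)) := by
    intro u
    rw [← ofReal_integral_eq_lintegral_ofReal (hint u) (Filter.Eventually.of_forall fun _ => (Real.exp_pos _).le)]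
    have := congrFun (ProbabilityTheory.mgf_id_gaussianReal (μ := 0) (v := 1)) u
    simp only [ProbabilityTheory.mgf, id] at this
    rw [this]; simp
  have hfi : ∀ t, Integrable (fun x => Real.exp (t * f x)) μ := by
    intro t
    apply bdd_integrable (M := Real.exp (|t| * M)) (by fun_prop)
    intro x
    rw [abs_of_pos (Real.exp_pos _), Real.exp_le_exp]
    calc t * f x ≤ |t * f x| := le_abs_self _
      _ = |t| * |f x| := abs_mul _ _
      _ ≤ _ := by gcongr; exact hM x
  have h2 : ∀ t, ∫⁻ x, ENNReal.ofReal (Real.exp (t * f x)) ∂μ ≤ ENNReal.ofReal (Real.exp (s * t ^ 2 / 2)) := by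
    intro t
    rw [← ofReal_integral_eq_lintegral_ofReal (hfi t) (Filter.Eventually.of_forall fun _ => (Real.exp_pos _).le)]
    exact ENNReal.ofReal_le_ofReal (h t)
  have h3 : ∫⁻ z, ENNReal.ofReal (Real.exp (z ^ 2 / 4)) ∂γ ≤ 2 := by
    rw [show γ = _ from ProbabilityTheory.gaussianReal_of_var_ne_zero 0 one_ne_zero,
      lintegral_withDensity_eq_lintegral_mul _ (ProbabilityTheory.measurable_gaussianPDF _ _) (by fun_prop)]
    have : ∀ z : ℝ, (ProbabilityTheory.gaussianPDF 0 1 * fun z => ENNReal.ofReal (Real.exp (z ^ 2 / 4))) z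
        = ENNReal.ofReal ((√(2 * Real.pi))⁻¹ * Real.exp (-(1/4) * z ^ 2)) := by
      intro z
      simp only [Pi.mul_apply, ProbabilityTheory.gaussianPDF, ProbabilityTheory.gaussianPDFReal]
      rw [← ENNReal.ofReal_mul (by positivity), mul_assoc, ← Real.exp_add]
      congr 2
      · simp
      · simp; ring
    simp_rw [this]
    rw [← ofReal_integral_eq_lintegral_ofReal ((integrable_exp_neg_mul_sq (by norm_num)).const_mul _)
      (Filter.Eventually.of_forall fun _ => by positivity), integral_const_mul, integral_gaussian]
    rw [show (2 : ENNReal) = ENNReal.ofReal 2 by simp]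
    apply ENNReal.ofReal_le_ofReal
    rw [inv_mul_le_iff₀ (by positivity)]
    rw [Real.sqrt_le_left (by positivity), mul_pow, Real.sq_sqrt (by positivity)]
    linarith [Real.pi_pos]
  have h4 : ∫⁻ x, ENNReal.ofReal (Real.exp (f x ^ 2 / (4 * s))) ∂μ ≤ 2 := by
    calc _ = ∫⁻ x, ∫⁻ z, ENNReal.ofReal (Real.exp ((r * f x) * z)) ∂γ ∂μ := by
          congr 1; ext x; rw [h1]; congr 2; rw [mul_pow, hr2]; field_simp; ring
      _ = ∫⁻ z, ∫⁻ x, ENNReal.ofReal (Real.exp ((r * f x) * z)) ∂μ ∂γ := by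
          apply lintegral_lintegral_swap
          apply Measurable.aemeasurable
          simp only [Function.uncurry_def]
          fun_prop
      _ ≤ ∫⁻ z, ENNReal.ofReal (Real.exp (z ^ 2 / 4)) ∂γ := by
          apply lintegral_mono
          intro z
          have : ∀ x, r * f x * z = (r * z) * f x := fun x => by ring
          simp_rw [this]
          refine (h2 _).trans (le_of_eq ?_)
          congr 2; rw [mul_pow, hr2]; field_simp; ring
      _ ≤ 2 := h3
  rw [integral_eq_lintegral_of_nonneg_ae (Filter.Eventually.of_forall fun _ => (Real.exp_pos _).le)
    (by apply Measurable.aestronglyMeasurable; fun_prop)]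
  exact ENNReal.toReal_le_of_le_ofReal (by norm_num) (by simpa using h4)

lemma young (a b : ℝ) (ha : 0 ≤ a) : a * b ≤ a * Real.log a - a + Real.exp b := by
  rcases ha.eq_or_lt with rfl | ha
  · simp [(Real.exp_pos b).le]
  · have h := Real.add_one_le_exp (b - Real.log a)
    rw [Real.exp_sub, Real.exp_log ha, le_div_iff₀ ha] at h
    nlinarith

lemma ent {E : Type*} [MeasurableSpace E] (μ ν : Measure E) [IsProbabilityMeasure μ]
    [IsProbabilityMeasure ν] (hH : relEntropy μ ν < ⊤) (F : E → ℝ) (hF : Measurable F) (M : ℝ)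
    (hM : ∀ x, |F x| ≤ M) :
    ∫ x, F x ∂μ ≤ (relEntropy μ ν).toReal - 1 + ∫ x, Real.exp (F x) ∂ν := by
  unfold relEntropy at hH ⊢
  split_ifs at hH ⊢ with h
  swap
  · simp at hH
  obtain ⟨hac, hint⟩ := h
  rw [EReal.toReal_coe, ← integral_rnDeriv_smul hac]
  have h1 : Integrable (fun x => (μ.rnDeriv ν x).toReal) ν := Measure.integrable_toReal_rnDeriv
  have h2 : ∫ x, (μ.rnDeriv ν x).toReal ∂ν = 1 := by
    rw [Measure.integral_toReal_rnDeriv hac]; simp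
  have h3 : Integrable (fun x => Real.exp (F x)) ν := by
    apply bdd_integrable (M := Real.exp M) (by fun_prop)
    intro x
    rw [abs_of_pos (Real.exp_pos _), Real.exp_le_exp]
    exact (le_abs_self _).trans (hM x)
  have h4 : Integrable (fun x => (μ.rnDeriv ν x).toReal * Real.log (μ.rnDeriv ν x).toReal
      - (μ.rnDeriv ν x).toReal) ν := hint.sub h1
  rw [← h2, ← integral_sub hint h1, ← integral_add h4 h3]
  apply integral_mono
  · have : Integrable (fun x => F x * (μ.rnDeriv ν x).toReal) ν :=
      h1.bdd_mul hF.aestronglyMeasurable (Filter.Eventually.of_forall hM)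
    simpa [mul_comm] using this
  · exact h4.add h3
  · intro x
    exact young _ _ ENNReal.toReal_nonneg

lemma ent_nonneg {E : Type*} [MeasurableSpace E] (μ ν : Measure E) [IsProbabilityMeasure μ]
    [IsProbabilityMeasure ν] (hH : relEntropy μ ν < ⊤) : 0 ≤ (relEntropy μ ν).toReal := by
  have := ent μ ν hH (fun _ => 0) measurable_const 0 (by simp)
  simpa using this

section U
variable {X : Type*} [MeasurableSpace X]

lemma pair_meas {Z : Type*} [MeasurableSpace Z] {N : ℕ} {φ : X → X → Z}
    (hφ : Measurable (Function.uncurry φ)) (i j : Fin N) :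
    Measurable (fun x : Fin N → X => φ (x i) (x j)) :=
  Measurable.comp (g := Function.uncurry φ) (f := fun x : Fin N → X => (x i, x j)) hφ (by fun_prop)

lemma sq_le_of_abs {a b : ℝ} (h : |a| ≤ b) : a ^ 2 ≤ b ^ 2 := by
  rw [← sq_abs]; exact pow_le_pow_left₀ (abs_nonneg _) h 2

noncomputable def UU (N : ℕ) (φ : X → X → ℝ) (x : Fin N → X) : ℝ :=
  ((N : ℝ)⁻¹) ^ 2 * ∑ i, ∑ j, φ (x i) (x j)

lemma UU_meas (N : ℕ) (φ : X → X → ℝ) (hφ : Measurable (Function.uncurry φ)) :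
    Measurable (UU N φ) := by
  unfold UU
  refine Measurable.const_mul ?_ _
  refine Finset.measurable_fun_sum _ fun i _ => Finset.measurable_fun_sum _ fun j _ => ?_
  exact pair_meas hφ i j

lemma UU_bdd (N : ℕ) (hN : 1 ≤ N) (φ : X → X → ℝ) (M : ℝ) (hM : ∀ a b, |φ a b| ≤ M)
    (x : Fin N → X) : |UU N φ x| ≤ M := by
  have hN' : (0 : ℝ) < N := by exact_mod_cast hN
  unfold UU
  rw [abs_mul, abs_of_nonneg (by positivity)]
  have : |∑ i, ∑ j, φ (x i) (x j)| ≤ ∑ i : Fin N, ∑ j : Fin N, M :=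
    (Finset.abs_sum_le_sum_abs _ _).trans (Finset.sum_le_sum fun i _ =>
      (Finset.abs_sum_le_sum_abs _ _).trans (Finset.sum_le_sum fun j _ => hM _ _))
  simp only [Finset.sum_const, Finset.card_univ, Fintype.card_fin, nsmul_eq_mul] at this
  calc _ ≤ ((N : ℝ)⁻¹) ^ 2 * (N * (N * M)) := by gcongr
    _ = M := by field_simp

lemma UU_diff (N : ℕ) (hN : 1 ≤ N) (φ : X → X → ℝ) (M : ℝ) (hM : ∀ a b, |φ a b| ≤ M)
    (x : Fin N → X) (k : Fin N) (a : X) :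
    |UU N φ (Function.update x k a) - UU N φ x| ≤ 4 * M / N := by
  have hN' : (0 : ℝ) < N := by exact_mod_cast hN
  have hM0 : 0 ≤ M := (abs_nonneg _).trans (hM a a)
  unfold UU
  rw [← mul_sub, abs_mul, abs_of_nonneg (by positivity), ← Finset.sum_sub_distrib]
  simp_rw [← Finset.sum_sub_distrib]
  have hb : ∀ i j, |φ (Function.update x k a i) (Function.update x k a j) - φ (x i) (x j)| ≤
      (if i = k then 2 * M else 0) + (if j = k then 2 * M else 0) := by
    intro i j
    have h2 : |φ (Function.update x k a i) (Function.update x k a j) - φ (x i) (x j)| ≤ 2 * M := by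
      have := abs_sub (φ (Function.update x k a i) (Function.update x k a j)) (φ (x i) (x j))
      linarith [hM (Function.update x k a i) (Function.update x k a j), hM (x i) (x j)]
    by_cases hi : i = k
    · rw [if_pos hi]
      have : 0 ≤ (if j = k then 2 * M else 0) := by split_ifs <;> positivity
      linarith
    · by_cases hj : j = k
      · rw [if_neg hi, if_pos hj]; linarith
      · simp [hi, hj]
  have : |∑ i, ∑ j, (φ (Function.update x k a i) (Function.update x k a j) - φ (x i) (x j))| ≤
      ∑ i : Fin N, ∑ j : Fin N, ((if i = k then 2 * M else 0) + (if j = k then 2 * M else 0)) :=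
    (Finset.abs_sum_le_sum_abs _ _).trans (Finset.sum_le_sum fun i _ =>
      (Finset.abs_sum_le_sum_abs _ _).trans (Finset.sum_le_sum fun j _ => hb _ _))
  have h3 : ∑ i : Fin N, ∑ j : Fin N, ((if i = k then 2 * M else 0) + (if j = k then 2 * M else 0))
      = N * (4 * M) := by
    simp [Finset.sum_add_distrib]; ring
  rw [h3] at this
  calc _ ≤ ((N : ℝ)⁻¹) ^ 2 * (N * (4 * M)) := by gcongr
    _ = _ := by field_simp

lemma UU_mean (ρ : Measure X) [IsProbabilityMeasure ρ] (N : ℕ) (hN : 1 ≤ N) (φ : X → X → ℝ)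
    (hφ : Measurable (Function.uncurry φ)) (M : ℝ) (hM : ∀ a b, |φ a b| ≤ M) :
    |∫ x, UU N φ x ∂(Measure.pi fun _ => ρ) - ∫ a, ∫ b, φ a b ∂ρ ∂ρ| ≤ 2 * M / N := by
  have hN' : (0 : ℝ) < N := by exact_mod_cast hN
  set m := ∫ a, ∫ b, φ a b ∂ρ ∂ρ with hm
  have hmM : |m| ≤ M := bdd_integral fun a => bdd_integral fun b => hM a b
  have hmeas : ∀ i j : Fin N, Measurable (fun x : Fin N → X => φ (x i) (x j)) := fun i j =>
    pair_meas hφ i j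
  have hint : ∀ i j : Fin N, Integrable (fun x : Fin N → X => φ (x i) (x j)) (Measure.pi fun _ => ρ) :=
    fun i j => bdd_integrable (hmeas i j) (fun _ => hM _ _)
  have hij : ∀ i j : Fin N, i ≠ j → ∫ x, φ (x i) (x j) ∂(Measure.pi fun _ => ρ) = m := by
    intro i j hne
    have hI := (ProbabilityTheory.iIndepFun_pi (μ := fun _ : Fin N => ρ) (X := fun _ => (id : X → X))
      (fun _ => aemeasurable_id)).indepFun hne
    have h1 := (ProbabilityTheory.indepFun_iff_map_prod_eq_prod_map_map
      (by exact (measurable_pi_apply i).aemeasurable) (by exact (measurable_pi_apply j).aemeasurable)).1 hI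
    have h2 : ∀ i, Measure.map (fun x : Fin N → X => id (x i)) (Measure.pi fun _ => ρ) = ρ := fun i =>
      (measurePreserving_eval (fun _ : Fin N => ρ) i).map_eq
    rw [h2, h2] at h1
    have h3 : ∫ p, Function.uncurry φ p ∂(ρ.prod ρ) = m := by
      rw [integral_prod _ (bdd_integrable hφ (fun p => hM _ _))]
      rfl
    rw [← h3, ← h1, integral_map (by exact ((measurable_pi_apply i).prodMk (measurable_pi_apply j)).aemeasurable) hφ.aestronglyMeasurable]
    rfl
  have hE : ∫ x, UU N φ x ∂(Measure.pi fun _ => ρ) =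
      ((N : ℝ)⁻¹) ^ 2 * ∑ i : Fin N, ∑ j : Fin N, ∫ x : Fin N → X, φ (x i) (x j) ∂(Measure.pi fun _ => ρ) := by
    unfold UU
    rw [integral_const_mul, integral_finset_sum _ (fun i _ => integrable_finset_sum _ fun j _ => hint i j)]
    congr 2
    ext i
    rw [integral_finset_sum _ (fun j _ => hint i j)]
  have hm2 : m = ((N : ℝ)⁻¹) ^ 2 * ∑ i : Fin N, ∑ j : Fin N, m := by
    simp; field_simp
  rw [hE]
  nth_rw 1 [hm2]
  rw [← mul_sub, abs_mul, abs_of_nonneg (by positivity), ← Finset.sum_sub_distrib]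
  simp_rw [← Finset.sum_sub_distrib]
  have hb : ∀ i j : Fin N, |(∫ x : Fin N → X, φ (x i) (x j) ∂(Measure.pi fun _ => ρ)) - m| ≤ if i = j then 2 * M else 0 := by
    intro i j
    split_ifs with h
    · have h1 : |∫ x : Fin N → X, φ (x i) (x j) ∂(Measure.pi fun _ => ρ)| ≤ M := bdd_integral fun _ => hM _ _
      have := abs_sub (∫ x : Fin N → X, φ (x i) (x j) ∂(Measure.pi fun _ => ρ)) m
      linarith
    · simp [hij i j h]
  have : |∑ i : Fin N, ∑ j : Fin N, ((∫ x : Fin N → X, φ (x i) (x j) ∂(Measure.pi fun _ => ρ)) - m)| ≤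
      ∑ i : Fin N, ∑ j : Fin N, (if i = j then 2 * M else 0) :=
    (Finset.abs_sum_le_sum_abs _ _).trans (Finset.sum_le_sum fun i _ =>
      (Finset.abs_sum_le_sum_abs _ _).trans (Finset.sum_le_sum fun j _ => hb _ _))
  simp only [Finset.sum_ite_eq, Finset.mem_univ, if_true, Finset.sum_const, Finset.card_univ, Fintype.card_fin, nsmul_eq_mul] at this
  calc _ ≤ ((N : ℝ)⁻¹) ^ 2 * (N * (2 * M)) := by gcongr
    _ = _ := by field_simp

lemma UU_main (ρ : Measure X) [IsProbabilityMeasure ρ] (N : ℕ) (hN : 1 ≤ N) (φ : X → X → ℝ)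
    (hφ : Measurable (Function.uncurry φ)) (M : ℝ) (hM0 : 0 < M) (hM : ∀ a b, |φ a b| ≤ M)
    (ρN : Measure (Fin N → X)) [IsProbabilityMeasure ρN]
    (hH : relEntropy ρN (Measure.pi fun _ => ρ) < ⊤) :
    ∫ x, (UU N φ x - ∫ a, ∫ b, φ a b ∂ρ ∂ρ) ^ 2 ∂ρN ≤
      640 * M ^ 2 / N * ((relEntropy ρN (Measure.pi fun _ => ρ)).toReal + 1) := by
  have hN' : (0 : ℝ) < N := by exact_mod_cast hN
  have hN1 : (1 : ℝ) ≤ N := by exact_mod_cast hN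
  set m := ∫ a, ∫ b, φ a b ∂ρ ∂ρ with hm
  set u := ∫ x, UU N φ x ∂(Measure.pi fun _ => ρ) with hu
  set H := (relEntropy ρN (Measure.pi fun _ => ρ)).toReal with hHdef
  have hH0 : 0 ≤ H := ent_nonneg _ _ hH
  have hmM : |m| ≤ M := bdd_integral fun a => bdd_integral fun b => hM a b
  have hUM := UU_bdd N hN φ M hM
  have huM : |u| ≤ M := bdd_integral hUM
  have hUm := UU_meas N φ hφ
  have hum : |u - m| ≤ 2 * M / N := UU_mean ρ N hN φ hφ M hM
  set s : ℝ := 16 * M ^ 2 / N with hs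
  have hs0 : 0 < s := by positivity
  have h1 := expSq (Measure.pi fun _ : Fin N => ρ) (fun x => UU N φ x - u) (hUm.sub_const u) (2 * M)
    (fun x => by have := abs_sub (UU N φ x) u; linarith [hUM x]) s hs0
    (fun t => by
      have := mcd ρ (4 * M / N) (by positivity) N (UU N φ) hUm M hUM (UU_diff N hN φ M hM) t
      refine this.trans (le_of_eq ?_)
      congr 1
      rw [hs]; field_simp; ring)
  have hpt : ∀ x, (UU N φ x - m) ^ 2 / (8 * s) ≤ (UU N φ x - u) ^ 2 / (4 * s) + 1 := by
    intro x
    have h2 : (UU N φ x - m) ^ 2 ≤ 2 * (UU N φ x - u) ^ 2 + 2 * (u - m) ^ 2 := by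
      nlinarith [sq_nonneg ((UU N φ x - u) - (u - m))]
    have h3 : (u - m) ^ 2 ≤ 4 * s := by
      have : (u - m) ^ 2 ≤ (2 * M / N) ^ 2 := by
        rw [← sq_abs]; gcongr
      refine this.trans ?_
      rw [hs, div_pow, mul_div_assoc', div_le_div_iff₀ (by positivity) hN']
      have : 0 < M ^ 2 * N := by positivity
      nlinarith
    rw [div_add_one (by positivity), div_le_div_iff₀ (by positivity) (by positivity)]
    nlinarith
  have hbd : ∀ x, |(UU N φ x - m) ^ 2 / (8 * s)| ≤ (2 * M) ^ 2 / (8 * s) := by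
    intro x
    rw [abs_of_nonneg (by positivity)]
    refine div_le_div_of_nonneg_right (sq_le_of_abs ?_) (by positivity)
    have := abs_sub (UU N φ x) m
    linarith [hUM x]
  have h4 := ent ρN (Measure.pi fun _ => ρ) hH (fun x => (UU N φ x - m) ^ 2 / (8 * s)) (by fun_prop) _ hbd
  have h5 : ∫ x, Real.exp ((UU N φ x - m) ^ 2 / (8 * s)) ∂(Measure.pi fun _ => ρ) ≤ 6 := by
    calc _ ≤ ∫ x, Real.exp ((UU N φ x - u) ^ 2 / (4 * s)) * Real.exp 1 ∂(Measure.pi fun _ => ρ) := by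
          apply integral_mono
          · apply bdd_integrable (M := Real.exp ((2 * M) ^ 2 / (8 * s))) (by fun_prop)
            intro x
            rw [abs_of_pos (Real.exp_pos _), Real.exp_le_exp]
            exact (le_abs_self _).trans (hbd x)
          · apply Integrable.mul_const
            apply bdd_integrable (M := Real.exp ((2 * M) ^ 2 / (4 * s))) (by fun_prop)
            intro x
            rw [abs_of_pos (Real.exp_pos _), Real.exp_le_exp]
            refine div_le_div_of_nonneg_right (sq_le_of_abs ?_) (by positivity)
            have := abs_sub (UU N φ x) u
            linarith [hUM x]
          · intro x
            simp only
            rw [← Real.exp_add, Real.exp_le_exp]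
            exact hpt x
      _ ≤ 2 * Real.exp 1 := by
          rw [integral_mul_const]; gcongr
      _ ≤ 6 := by linarith [Real.exp_one_lt_d9]
  rw [integral_div, div_le_iff₀ (by positivity)] at h4
  calc _ ≤ _ := h4
    _ ≤ (H - 1 + 6) * (8 * s) := by gcongr
    _ ≤ (5 * (H + 1)) * (8 * s) := by gcongr; linarith
    _ = _ := by rw [hs]; ring

noncomputable def UC (N : ℕ) (φ : X → X → ℂ) (x : Fin N → X) : ℂ :=
  ((N : ℂ)⁻¹) ^ 2 * ∑ i, ∑ j, φ (x i) (x j)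

lemma UC_meas (N : ℕ) (φ : X → X → ℂ) (hφ : Measurable (Function.uncurry φ)) :
    Measurable (UC N φ) := by
  unfold UC
  refine Measurable.const_mul ?_ _
  refine Finset.measurable_fun_sum _ fun i _ => Finset.measurable_fun_sum _ fun j _ => ?_
  exact pair_meas hφ i j

lemma UC_re (N : ℕ) (φ : X → X → ℂ) (x : Fin N → X) :
    (UC N φ x).re = UU N (fun a b => (φ a b).re) x := by
  unfold UC UU
  have : ((N : ℂ)⁻¹) ^ 2 = (((N : ℝ)⁻¹ ^ 2 : ℝ) : ℂ) := by push_cast; rfl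
  rw [this, Complex.re_ofReal_mul]; simp

lemma UC_im (N : ℕ) (φ : X → X → ℂ) (x : Fin N → X) :
    (UC N φ x).im = UU N (fun a b => (φ a b).im) x := by
  unfold UC UU
  have : ((N : ℂ)⁻¹) ^ 2 = (((N : ℝ)⁻¹ ^ 2 : ℝ) : ℂ) := by push_cast; rfl
  rw [this, Complex.im_ofReal_mul]; simp

lemma UC_main (ρ : Measure X) [IsProbabilityMeasure ρ] (N : ℕ) (hN : 1 ≤ N) (φ : X → X → ℂ)
    (hφ : Measurable (Function.uncurry φ)) (M : ℝ) (hM0 : 0 < M) (hM : ∀ a b, ‖φ a b‖ ≤ M)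
    (ρN : Measure (Fin N → X)) [IsProbabilityMeasure ρN]
    (hH : relEntropy ρN (Measure.pi fun _ => ρ) < ⊤) :
    Integrable (fun x => ‖UC N φ x - ∫ a, ∫ b, φ a b ∂ρ ∂ρ‖ ^ 2) ρN ∧
    ∫ x, ‖UC N φ x - ∫ a, ∫ b, φ a b ∂ρ ∂ρ‖ ^ 2 ∂ρN ≤
      1280 * M ^ 2 / N * ((relEntropy ρN (Measure.pi fun _ => ρ)).toReal + 1) := by
  have hre : Measurable (Function.uncurry fun a b => (φ a b).re) := Complex.measurable_re.comp hφ
  have him : Measurable (Function.uncurry fun a b => (φ a b).im) := Complex.measurable_im.comp hφ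
  have hreM : ∀ a b, |(φ a b).re| ≤ M := fun a b => (Complex.abs_re_le_norm _).trans (hM a b)
  have himM : ∀ a b, |(φ a b).im| ≤ M := fun a b => (Complex.abs_im_le_norm _).trans (hM a b)
  have h1 := UU_main ρ N hN _ hre M hM0 hreM ρN hH
  have h2 := UU_main ρ N hN _ him M hM0 himM ρN hH
  have hφa : ∀ a, Integrable (φ a) ρ := fun a =>
    Integrable.of_bound (hφ.comp (measurable_const.prodMk measurable_id)).aestronglyMeasurable M
      (Filter.Eventually.of_forall fun b => hM a b)
  have hφi : Integrable (fun a => ∫ b, φ a b ∂ρ) ρ := by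
    refine Integrable.of_bound (StronglyMeasurable.aestronglyMeasurable ?_) M
      (Filter.Eventually.of_forall fun a => ?_)
    · exact hφ.stronglyMeasurable.integral_prod_right
    · simpa using norm_integral_le_of_norm_le_const (μ := ρ) (Filter.Eventually.of_forall (hM a))
  have hmre : (∫ a, ∫ b, φ a b ∂ρ ∂ρ).re = ∫ a, ∫ b, (φ a b).re ∂ρ ∂ρ := by
    have := (integral_re hφi).symm
    simp only [RCLike.re_to_complex] at this
    rw [this]; congr 1; ext a
    have := (integral_re (hφa a)).symm
    simpa only [RCLike.re_to_complex] using this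
  have hmim : (∫ a, ∫ b, φ a b ∂ρ ∂ρ).im = ∫ a, ∫ b, (φ a b).im ∂ρ ∂ρ := by
    have := (integral_im hφi).symm
    simp only [RCLike.im_to_complex] at this
    rw [this]; congr 1; ext a
    have := (integral_im (hφa a)).symm
    simpa only [RCLike.im_to_complex] using this
  have heq : ∀ x, ‖UC N φ x - ∫ a, ∫ b, φ a b ∂ρ ∂ρ‖ ^ 2 =
      (UU N (fun a b => (φ a b).re) x - ∫ a, ∫ b, (φ a b).re ∂ρ ∂ρ) ^ 2 +
      (UU N (fun a b => (φ a b).im) x - ∫ a, ∫ b, (φ a b).im ∂ρ ∂ρ) ^ 2 := by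
    intro x
    rw [← Complex.normSq_eq_norm_sq, Complex.normSq_apply, Complex.sub_re, Complex.sub_im, UC_re, UC_im,
      hmre, hmim]
    ring
  simp_rw [heq]
  have hI : ∀ ψ : X → X → ℝ, Measurable (Function.uncurry ψ) → (∀ a b, |ψ a b| ≤ M) →
      Integrable (fun x => (UU N ψ x - ∫ a, ∫ b, ψ a b ∂ρ ∂ρ) ^ 2) ρN := by
    intro ψ hψ hψM
    have := UU_meas N ψ hψ
    apply bdd_integrable (M := (2 * M) ^ 2) (by fun_prop)
    intro x
    rw [abs_of_nonneg (by positivity), ← sq_abs]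
    gcongr
    have h1 := abs_sub (UU N ψ x) (∫ a, ∫ b, ψ a b ∂ρ ∂ρ)
    have h2 : |∫ a, ∫ b, ψ a b ∂ρ ∂ρ| ≤ M := bdd_integral fun a => bdd_integral fun b => hψM a b
    linarith [UU_bdd N hN ψ M hψM x]
  refine ⟨(hI _ hre hreM).add (hI _ him himM), ?_⟩
  rw [integral_add (hI _ hre hreM) (hI _ him himM)]
  refine (add_le_add h1 h2).trans (le_of_eq ?_)
  ring

end U

lemma emp_integral (d N : ℕ) (x : Fin N → Torus d) (f : Torus d → ℂ) :
    ∫ a, f a ∂(empiricalMeasure d N x) = (N : ℂ)⁻¹ * ∑ i, f (x i) := by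
  unfold empiricalMeasure
  rw [integral_smul_measure, integral_finset_sum_measure]
  · simp [integral_dirac]
  · intro i _
    exact integrable_dirac (by simp)

lemma emp_UC (d N : ℕ) (x : Fin N → Torus d) (φ : Torus d → Torus d → ℂ) :
    ∫ a, ∫ b, φ a b ∂(empiricalMeasure d N x) ∂(empiricalMeasure d N x) = UC N φ x := by
  simp_rw [emp_integral]
  unfold UC
  rw [← Finset.mul_sum]
  ring

lemma ek_meas (d : ℕ) (k : Fin d → ℤ) : Measurable (ek d k) := by
  unfold ek
  refine Finset.measurable_fun_prod _ fun j _ => ?_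
  exact (fourier (k j)).continuous.measurable.comp (measurable_pi_apply j)

lemma ek_norm (d : ℕ) (k : Fin d → ℤ) (x : Torus d) : ‖ek d k x‖ = 1 := by
  unfold ek
  rw [norm_prod]
  apply Finset.prod_eq_one
  intro j _
  rw [fourier_apply]
  exact Circle.norm_coe _

lemma ek_add (d : ℕ) (k : Fin d → ℤ) (x y : Torus d) : ek d k (x + y) = ek d k x * ek d k y := by
  unfold ek
  rw [← Finset.prod_mul_distrib]
  refine Finset.prod_congr rfl fun j _ => ?_
  simp only [fourier_apply, Pi.add_apply, smul_add, AddCircle.toCircle_add, Circle.coe_mul]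

lemma exists_rep (z : AddCircle (2 * Real.pi)) : ∃ r : ℝ, (r : AddCircle (2 * Real.pi)) = z ∧ |r| = ‖z‖ := by
  obtain ⟨x, rfl⟩ := QuotientAddGroup.mk_surjective z
  refine ⟨x - round ((2 * Real.pi)⁻¹ * x) * (2 * Real.pi), ?_, ?_⟩
  · have : ((round ((2 * Real.pi)⁻¹ * x) * (2 * Real.pi) : ℝ) : AddCircle (2 * Real.pi)) = 0 := by
      rw [AddCircle.coe_eq_zero_iff]
      exact ⟨round ((2 * Real.pi)⁻¹ * x), by simp⟩
    rw [AddCircle.coe_sub, this, sub_zero]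
  · exact (AddCircle.norm_eq _).symm

lemma ek_sub_one (d : ℕ) (k : Fin d → ℤ) (z : Torus d) :
    ‖ek d k z - 1‖ ≤ ∑ j, |(k j : ℝ)| * ‖z j‖ := by
  choose r hr hr' using fun j => exists_rep (z j)
  have : ek d k z = Complex.exp (Complex.I * ((∑ j, (k j : ℝ) * r j : ℝ) : ℂ)) := by
    unfold ek
    push_cast
    rw [Finset.mul_sum, Complex.exp_sum]
    refine Finset.prod_congr rfl fun j _ => ?_
    rw [← hr j, fourier_coe_apply]
    congr 1
    have : (Real.pi : ℂ) ≠ 0 := by exact_mod_cast Real.pi_ne_zero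
    push_cast
    field_simp
  rw [this]
  refine Real.norm_exp_I_mul_ofReal_sub_one_le.trans ?_
  refine (norm_sum_le _ _).trans (Finset.sum_le_sum fun j _ => ?_)
  rw [norm_mul, Real.norm_eq_abs, Real.norm_eq_abs, hr']

lemma abs_le_nk (d : ℕ) (k : Fin d → ℤ) (j : Fin d) : |(k j : ℝ)| ≤ √(∑ j, (k j : ℝ) ^ 2) := by
  apply Real.abs_le_sqrt
  exact Finset.single_le_sum (f := fun j => (k j : ℝ) ^ 2) (fun _ _ => sq_nonneg _) (Finset.mem_univ j)

lemma ek_lip (d : ℕ) (k : Fin d → ℤ) (x y : Torus d) :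
    ‖ek d k x - ek d k y‖ ≤ d * √(∑ j, (k j : ℝ) ^ 2) * dist (x - y) 0 := by
  have h1 : ek d k x - ek d k y = ek d k y * (ek d k (x - y) - 1) := by
    rw [mul_sub, ← ek_add]; simp
  rw [h1, norm_mul, ek_norm, one_mul]
  refine (ek_sub_one d k _).trans ?_
  calc _ ≤ ∑ j : Fin d, √(∑ j, (k j : ℝ) ^ 2) * dist (x - y) 0 := by
        refine Finset.sum_le_sum fun j _ => ?_
        gcongr
        · exact abs_le_nk d k j
        · have := dist_le_pi_dist (x - y) 0 j
          rwa [Pi.zero_apply, dist_zero_right] at this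
    _ = _ := by simp; ring

lemma dot_le (d : ℕ) (k : Fin d → ℤ) (v : EuclideanSpace ℝ (Fin d)) :
    |∑ j, (k j : ℝ) * v j| ≤ √(∑ j, (k j : ℝ) ^ 2) * ‖v‖ := by
  rw [EuclideanSpace.norm_eq, ← Real.sqrt_mul (by positivity)]
  apply Real.abs_le_sqrt
  simp only [Real.norm_eq_abs, sq_abs]
  exact Finset.sum_mul_sq_le_sq_mul_sq _ _ _

lemma summable_k (d : ℕ) (β : ℝ) (hβ : (d : ℝ) / 2 < β) :
    Summable (fun k : {k : Fin d → ℤ // k ≠ 0} => (1 + ∑ j, (k.1 j : ℝ) ^ 2) ^ (-β)) := by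
  set L : Submodule ℤ (Fin d → ℝ) := Submodule.span ℤ (Set.range (Pi.basisFun ℝ (Fin d))) with hL
  have hfr : Module.finrank ℤ L = d := by
    have := ZLattice.rank ℝ L
    rw [this]; simp
  have hs := ZLattice.summable_norm_rpow L (-(2 * β)) (by rw [hfr]; linarith)
  have hmem : ∀ k : Fin d → ℤ, (fun j => (k j : ℝ)) ∈ L := by
    intro k
    rw [hL, Module.Basis.mem_span_iff_repr_mem]
    intro j
    simp
  have hinj : Function.Injective (fun k : {k : Fin d → ℤ // k ≠ 0} => (⟨fun j => (k.1 j : ℝ), hmem k.1⟩ : L)) := by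
    intro k l h
    ext j
    have := congrFun (congrArg Subtype.val h) j
    simpa using this
  refine Summable.of_nonneg_of_le (fun k => by positivity) (fun k => ?_) (hs.comp_injective hinj)
  simp only [Function.comp]
  have hk0 : (0 : ℝ) < ‖(⟨fun j => (k.1 j : ℝ), hmem k.1⟩ : L)‖ := by
    rw [norm_pos_iff]
    intro h
    apply k.2
    ext j
    have := congrFun (congrArg Subtype.val h) j
    simpa using this
  have hβ0 : 0 ≤ β := le_trans (by positivity) hβ.le
  set r := ‖(⟨fun j => (k.1 j : ℝ), hmem k.1⟩ : L)‖ with hr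
  have h1 : r ^ 2 ≤ 1 + ∑ j, (k.1 j : ℝ) ^ 2 := by
    have : r ≤ √(∑ j, (k.1 j : ℝ) ^ 2) := by
      rw [hr]
      change ‖(fun j => (k.1 j : ℝ))‖ ≤ _
      rw [pi_norm_le_iff_of_nonneg (Real.sqrt_nonneg _)]
      intro j
      exact abs_le_nk d k.1 j
    have h2 := pow_le_pow_left₀ hk0.le this 2
    rw [Real.sq_sqrt (by positivity)] at h2
    linarith
  calc _ ≤ (r ^ 2) ^ (-β) := Real.rpow_le_rpow_of_nonpos (by positivity) h1 (by linarith)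
    _ = _ := by
      rw [← Real.rpow_natCast r 2, ← Real.rpow_mul hk0.le]
      congr 1; push_cast; ring

lemma final (d : ℕ) (α : ℝ) (hα : (d : ℝ) / 2 + 2 < α) (L : ℝ) (hL : 0 < L)
    (φ : (Fin d → ℤ) → Torus d → Torus d → ℂ) (hφ : ∀ k, Measurable (Function.uncurry (φ k)))
    (hb : ∀ k a b, ‖φ k a b‖ ≤ L * (1 + ∑ j, (k j : ℝ) ^ 2))
    (P : (Fin d → ℤ) → Measure (Torus d) → ℂ)
    (hP : ∀ k μ, P k μ = ∫ a, ∫ b, φ k a b ∂μ ∂μ)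
    (N : ℕ) (hN : 2 ≤ N) (ρ : Measure (Torus d)) [IsProbabilityMeasure ρ]
    (ρN : Measure (Fin N → Torus d)) [IsProbabilityMeasure ρN]
    (hH : relEntropy ρN (Measure.pi fun _ => ρ) < ⊤) :
    ∫ x : Fin N → Torus d,
              ∑' k : {k : Fin d → ℤ // k ≠ 0},
                (1 + ∑ j, ((k.1 j : ℝ)) ^ 2) ^ (-α) *
                  ‖P k.1 (empiricalMeasure d N x) - P k.1 ρ‖ ^ 2
            ∂ρN
      ≤ (1280 * L ^ 2 * (∑' k : {k : Fin d → ℤ // k ≠ 0}, (1 + ∑ j, (k.1 j : ℝ) ^ 2) ^ (-(α - 2))) + 1) / N *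
        ((relEntropy ρN (Measure.pi fun _ => ρ)).toReal + 1) := by
  have hN' : (0 : ℝ) < N := by exact_mod_cast (by omega : 0 < N)
  have hS := summable_k d (α - 2) (by linarith)
  set H := (relEntropy ρN (Measure.pi fun _ => ρ)).toReal with hHdef
  have hH0 : 0 ≤ H := ent_nonneg _ _ hH
  simp_rw [hP, emp_UC]
  have hm := fun k : Fin d → ℤ => UC_main ρ N (by omega) (φ k) (hφ k) (L * (1 + ∑ j, (k j : ℝ) ^ 2))
    (by positivity) (hb k) ρN hH
  have hint : ∀ k : {k : Fin d → ℤ // k ≠ 0}, Integrable (fun x => (1 + ∑ j, ((k.1 j : ℝ)) ^ 2) ^ (-α) *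
      ‖UC N (φ k.1) x - ∫ a, ∫ b, φ k.1 a b ∂ρ ∂ρ‖ ^ 2) ρN := fun k => (hm k.1).1.const_mul _
  have hle : ∀ k : {k : Fin d → ℤ // k ≠ 0}, ∫ x, (1 + ∑ j, ((k.1 j : ℝ)) ^ 2) ^ (-α) *
      ‖UC N (φ k.1) x - ∫ a, ∫ b, φ k.1 a b ∂ρ ∂ρ‖ ^ 2 ∂ρN ≤
      (1280 * L ^ 2 / N * (H + 1)) * (1 + ∑ j, (k.1 j : ℝ) ^ 2) ^ (-(α - 2)) := by
    intro k
    rw [integral_const_mul]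
    have hpos : 0 < 1 + ∑ j, (k.1 j : ℝ) ^ 2 := by positivity
    refine (mul_le_mul_of_nonneg_left (hm k.1).2 (by positivity)).trans (le_of_eq ?_)
    rw [show -(α - 2) = -α + (2 : ℕ) by push_cast; ring, Real.rpow_add hpos, Real.rpow_natCast]
    ring
  have hSC := hS.mul_left (1280 * L ^ 2 / N * (H + 1))
  have hsum : Summable fun k : {k : Fin d → ℤ // k ≠ 0} => ∫ x, (1 + ∑ j, ((k.1 j : ℝ)) ^ 2) ^ (-α) *
      ‖UC N (φ k.1) x - ∫ a, ∫ b, φ k.1 a b ∂ρ ∂ρ‖ ^ 2 ∂ρN :=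
    Summable.of_nonneg_of_le (fun k => integral_nonneg fun x => by positivity) hle hSC
  rw [← integral_tsum_of_summable_integral_norm hint]
  · refine (hsum.tsum_le_tsum hle hSC).trans ?_
    rw [tsum_mul_left]
    have : 0 ≤ 1 / (N : ℝ) * (H + 1) := by positivity
    refine le_of_sub_nonneg (this.trans (le_of_eq ?_))
    ring
  · convert hsum using 4 with k x
    exact Real.norm_of_nonneg (by positivity)

lemma dot_meas (d : ℕ) (K : Torus d → EuclideanSpace ℝ (Fin d)) (hK : Measurable K) (k : Fin d → ℤ) :
    Measurable (fun p : Torus d × Torus d => ((∑ j, (k j : ℝ) * K (p.1 - p.2) j : ℝ) : ℂ)) := by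
  refine Complex.measurable_ofReal.comp (Finset.measurable_fun_sum _ fun j _ => Measurable.const_mul ?_ _)
  have h1 : Measurable (fun p : Torus d × Torus d => K (p.1 - p.2)) :=
    hK.comp (measurable_fst.sub measurable_snd)
  have h2 : Measurable (fun v : EuclideanSpace ℝ (Fin d) => v j) := by fun_prop
  exact h2.comp h1

lemma sqrt_le_one_add {s : ℝ} (hs : 0 ≤ s) : √s ≤ 1 + s := by
  nlinarith [Real.sq_sqrt hs, sq_nonneg (√s - 1), Real.sqrt_nonneg s]

/-- **Uniform estimate on the interaction term (Lemma 2.6 of Wang–Zhao–Zhu).**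
Let `K : 𝕋^d → ℝ^d` satisfy either (i) `K` bounded (by `B`), or (ii) `K(−x) = −K(x)`,
`K(0) = 0` and `sup_x |x||K(x)| ≤ B`, where `|x| = dist(x,0)` on `𝕋^d`.  Then for every
`α > d/2 + 2` there is a constant `C > 0`, depending only on `α`, `d` and `B`, such that
for every `N ≥ 2`, every probability measure `ρ̄` on `𝕋^d`, and every probability measure
`ρ_N` on `(𝕋^d)^N` with `H(ρ_N | ρ̄^{⊗N}) < ∞`:
`∫ ∑_{k ≠ 0} ⟨k⟩^{−2α} |Φ_k(μ_N) − Φ_k(ρ̄)|² dρ_N ≤ (C/N)(H(ρ_N | ρ̄^{⊗N}) + 1)`,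
with `Φ_k` the pairing of the respective case. -/
theorem statement8 (d : ℕ) (hd : 1 ≤ d) (α : ℝ) (hα : (d : ℝ) / 2 + 2 < α) (B : ℝ) :
    (∃ C : ℝ, 0 < C ∧
      ∀ K : Torus d → EuclideanSpace ℝ (Fin d), Measurable K →
        (∀ x, ‖K x‖ ≤ B) →
        ∀ N : ℕ, 2 ≤ N →
        ∀ (ρ : Measure (Torus d)), IsProbabilityMeasure ρ →
        ∀ (ρN : Measure (Fin N → Torus d)), IsProbabilityMeasure ρN →
          relEntropy ρN (Measure.pi fun _ => ρ) < ⊤ →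
          ∫ x : Fin N → Torus d,
              ∑' k : {k : Fin d → ℤ // k ≠ 0},
                (1 + ∑ j, ((k.1 j : ℝ)) ^ 2) ^ (-α) *
                  ‖pairK₁ d K k.1 (empiricalMeasure d N x) - pairK₁ d K k.1 ρ‖ ^ 2
            ∂ρN
          ≤ C / N * ((relEntropy ρN (Measure.pi fun _ => ρ)).toReal + 1)) ∧
    (∃ C : ℝ, 0 < C ∧
      ∀ K : Torus d → EuclideanSpace ℝ (Fin d), Measurable K →
        (∀ x, K (-x) = -K x) → K 0 = 0 →
        (∀ x, dist x 0 * ‖K x‖ ≤ B) →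
        ∀ N : ℕ, 2 ≤ N →
        ∀ (ρ : Measure (Torus d)), IsProbabilityMeasure ρ →
        ∀ (ρN : Measure (Fin N → Torus d)), IsProbabilityMeasure ρN →
          relEntropy ρN (Measure.pi fun _ => ρ) < ⊤ →
          ∫ x : Fin N → Torus d,
              ∑' k : {k : Fin d → ℤ // k ≠ 0},
                (1 + ∑ j, ((k.1 j : ℝ)) ^ 2) ^ (-α) *
                  ‖pairK₂ d K k.1 (empiricalMeasure d N x) - pairK₂ d K k.1 ρ‖ ^ 2
            ∂ρN
          ≤ C / N * ((relEntropy ρN (Measure.pi fun _ => ρ)).toReal + 1)) := by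
  have hS0 : 0 ≤ ∑' k : {k : Fin d → ℤ // k ≠ 0}, (1 + ∑ j, (k.1 j : ℝ) ^ 2) ^ (-(α - 2)) :=
    tsum_nonneg fun k => by positivity
  have hd1 : (1 : ℝ) ≤ d := by exact_mod_cast hd
  constructor
  · refine ⟨1280 * (|B| + 1) ^ 2 * (∑' k : {k : Fin d → ℤ // k ≠ 0}, (1 + ∑ j, (k.1 j : ℝ) ^ 2) ^ (-(α - 2))) + 1,
      by positivity, ?_⟩
    intro K hK hKB N hN ρ hρ ρN hρN hH
    refine final d α hα (|B| + 1) (by positivity)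
      (fun k x y => ((∑ j, (k j : ℝ) * K (x - y) j : ℝ) : ℂ) * ek d k x) (fun k => ?_) (fun k x y => ?_)
      (pairK₁ d K) (fun k μ => rfl) N hN ρ ρN hH
    · exact (dot_meas d K hK k).mul ((ek_meas d k).comp measurable_fst)
    · rw [norm_mul, ek_norm, mul_one, Complex.norm_real, Real.norm_eq_abs]
      refine (dot_le d k _).trans ?_
      rw [mul_comm]
      have h1 : ‖K (x - y)‖ ≤ |B| + 1 := (hKB _).trans (by linarith [le_abs_self B])
      have h2 := sqrt_le_one_add (s := ∑ j, (k j : ℝ) ^ 2) (by positivity)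
      gcongr
  · refine ⟨1280 * (d * (|B| + 1)) ^ 2 * (∑' k : {k : Fin d → ℤ // k ≠ 0}, (1 + ∑ j, (k.1 j : ℝ) ^ 2) ^ (-(α - 2))) + 1,
      by positivity, ?_⟩
    intro K hK _ _ hKB N hN ρ hρ ρN hρN hH
    refine final d α hα (d * (|B| + 1)) (by positivity)
      (fun k x y => (2 : ℂ)⁻¹ * (((∑ j, (k j : ℝ) * K (x - y) j : ℝ) : ℂ) * (ek d k x - ek d k y)))
      (fun k => ?_) (fun k x y => ?_)
      (pairK₂ d K) (fun k μ => ?_) N hN ρ ρN hH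
    · exact ((dot_meas d K hK k).mul (((ek_meas d k).comp measurable_fst).sub
        ((ek_meas d k).comp measurable_snd))).const_mul _
    · rw [norm_mul, norm_mul, Complex.norm_real, Real.norm_eq_abs, norm_inv, Complex.norm_ofNat]
      have hq : 0 ≤ ∑ j, (k j : ℝ) ^ 2 := by positivity
      calc _ ≤ 2⁻¹ * ((√(∑ j, (k j : ℝ) ^ 2) * ‖K (x - y)‖) *
            (d * √(∑ j, (k j : ℝ) ^ 2) * dist (x - y) 0)) := by
            gcongr
            · exact dot_le d k _
            · exact ek_lip d k x y
        _ = 2⁻¹ * d * (√(∑ j, (k j : ℝ) ^ 2) ^ 2) * (dist (x - y) 0 * ‖K (x - y)‖) := by ring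
        _ ≤ 1 * d * (1 + ∑ j, (k j : ℝ) ^ 2) * (|B| + 1) := by
            rw [Real.sq_sqrt hq]
            gcongr
            · norm_num
            · linarith
            · exact (hKB _).trans (by linarith [le_abs_self B])
        _ = _ := by ring
    · unfold pairK₂
      simp_rw [integral_const_mul]
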